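/- arXiv:2106.01155 — 2 statements merged into one kernel-verified Lean document; each statement's English description precedes it below -/
import Mathlib

section
/- Let M be a Malcev algebra over F lying in the variety H, containing L = sl2(F), and such that mL ≠ 0 for every nonzero m ∈ M. Let U be the F-span in End_F(M) of the maps α(y,a,b) : x ↦ p(x,y,a,b) := −{ab,x,y} − {yb,a,x} + {xb,y,a} with y ∈ M and a,b ∈ L. Then U is contained in the centroid Γ(M), U is closed under composition, any two elements of U commute (so U is a commutative associative F-algebra), N_M = L·U (the span of all aα with a ∈ L, α ∈ U), and the linear map sl2(F) ⊗_F U → N_M sending a ⊗ α to aα is an isomorphism of F-algebras, where sl2(F) ⊗_F U carries the product (a⊗α)(b⊗β) = ab ⊗ αβ. In other words, N_M ≅ sl2(F) ⊗_F U. -/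
section
variable {K : Type*} [Field K] {M : Type*} [AddCommGroup M] [Module K M]

/-- the Jacobian `J(x,y,z) = (xy)z + (yz)x + (zx)y` -/
def mjac (μ : M →ₗ[K] M →ₗ[K] M) (x y z : M) : M :=
  μ (μ x y) z + μ (μ y z) x + μ (μ z x) y

/-- `{x,y,z} = (xy)z − (xz)y + 2·x(yz)` -/
def mbr (μ : M →ₗ[K] M →ₗ[K] M) (x y z : M) : M :=
  μ (μ x y) z - μ (μ x z) y + (2 : K) • μ x (μ y z)

/-- `h(y,z,t,x,u) = {yz,t,u}x + {yz,t,x}u + {yx,z,u}t + {yu,z,x}t` -/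
def mh (μ : M →ₗ[K] M →ₗ[K] M) (y z t x u : M) : M :=
  μ (mbr μ (μ y z) t u) x + μ (mbr μ (μ y z) t x) u +
    μ (mbr μ (μ y x) z u) t + μ (mbr μ (μ y u) z x) t

/-- A Malcev algebra structure: anticommutative (`x·x = 0`) together with the Malcev
identity `(xz)(yt) = ((xy)z)t + ((yz)t)x + ((zt)x)y + ((tx)y)z`. -/
def IsMalcev (μ : M →ₗ[K] M →ₗ[K] M) : Prop :=
  (∀ x, μ x x = 0) ∧
    ∀ x y z t, μ (μ x z) (μ y t) =
      μ (μ (μ x y) z) t + μ (μ (μ y z) t) x + μ (μ (μ z t) x) y + μ (μ (μ t x) y) z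

/-- the variety 𝓗 : `h(y,z,t,x,u) = 0` identically -/
def InVarietyH (μ : M →ₗ[K] M →ₗ[K] M) : Prop := ∀ y z t x u, mh μ y z t x u = 0

/-- `N_M = {m | J(m,a,b) = 0 ∀ a,b ∈ L}` -/
def NMset (μ : M →ₗ[K] M →ₗ[K] M) (L : Submodule K M) : Set M :=
  {m : M | ∀ a ∈ L, ∀ b ∈ L, mjac μ m a b = 0}

/-- `J_M = {m | {m,a,b} = 0 ∀ a,b ∈ L}` -/
def JMset (μ : M →ₗ[K] M →ₗ[K] M) (L : Submodule K M) : Set M :=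
  {m : M | ∀ a ∈ L, ∀ b ∈ L, mbr μ m a b = 0}

/-- the centroid Γ(M): linear operators commuting with all multiplications -/
def centroid (μ : M →ₗ[K] M →ₗ[K] M) : Set (Module.End K M) :=
  {α | ∀ x y : M, α (μ x y) = μ x (α y) ∧ α (μ x y) = μ (α x) y}

/-- `p(x,y,z,t) = −{zt,x,y} − {yt,z,x} + {xt,y,z}` -/
def pfun (μ : M →ₗ[K] M →ₗ[K] M) (x y z t : M) : M :=
  -(mbr μ (μ z t) x y) - mbr μ (μ y t) z x + mbr μ (μ x t) y z

/-- `U`: the span of the operators `α(y,a,b) : x ↦ p(x,y,a,b)` with `y ∈ M`, `a,b ∈ L` -/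
def Uspan (μ : M →ₗ[K] M →ₗ[K] M) (L : Submodule K M) : Submodule K (Module.End K M) :=
  Submodule.span K {φ : Module.End K M | ∃ y : M, ∃ a ∈ L, ∃ b ∈ L, ∀ x, φ x = pfun μ x y a b}

/-- the linear operator `m ↦ J(m,a,b)` -/
def jop (μ : M →ₗ[K] M →ₗ[K] M) (a b : M) : M →ₗ[K] M :=
  μ.flip b ∘ₗ μ.flip a + μ (μ a b) + μ.flip a ∘ₗ μ b

/-- `N_M` as a submodule (intersection of the kernels of `m ↦ J(m,a,b)`, `a,b ∈ L`) -/
def NMker (μ : M →ₗ[K] M →ₗ[K] M) (L : Submodule K M) : Submodule K M :=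
  ⨅ (a : M) (_ : a ∈ L) (b : M) (_ : b ∈ L), LinearMap.ker (jop μ a b)

open scoped TensorProduct

section Identities

variable {μ : M →ₗ[K] M →ₗ[K] M}

theorem IsMalcev.anticomm (hM : IsMalcev μ) (x y : M) : μ x y = -μ y x := by
  have h := hM.1 (x + y)
  simp only [map_add, LinearMap.add_apply, hM.1, zero_add, add_zero] at h
  exact eq_neg_of_add_eq_zero_right h

/-- In the variety `H`, `p(xw,y,z,t) = p(x,y,z,t)w`. -/
theorem pfun_mul_left (hM : IsMalcev μ) (hH : InVarietyH μ) (x w y z t : M) :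
    pfun μ (μ x w) y z t = μ (pfun μ x y z t) w := by
  have hs : ∀ a b, μ a b = -μ b a := hM.anticomm
  have m1 := hM.2 (μ z t) x y w
  have m2 := hM.2 w z (μ x y) t
  have m3 := hM.2 x (μ w t) y z
  have m4 := hM.2 x t (μ y z) w
  have m5 := hM.2 y (μ x w) z t
  have m6 := hM.2 (μ x w) y z t
  have m7 := hM.2 x (μ y z) w t
  have m8 := hM.2 x z (μ w t) y
  have m9 := hM.2 w (μ x y) t z
  have m10 := hM.2 (μ z t) x w y
  have m11 := hM.2 y (μ x w) t z
  have m12 := hM.2 y z (μ x w) t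
  have h1 := hH t w y x z
  have h2 := hH y z w x t
  have h3 := hH x t z w y
  have e3 : ∀ a b c d e, μ (μ a b) (μ (μ c d) e) = -μ (μ (μ c d) e) (μ a b) :=
    fun _ _ _ _ _ => hs _ _
  have ex : ∀ a b, μ x (μ a b) = -μ (μ a b) x := fun _ _ => hs _ _
  have ew : ∀ a b, μ w (μ a b) = -μ (μ a b) w := fun _ _ => hs _ _
  have ey : ∀ a b, μ y (μ a b) = -μ (μ a b) y := fun _ _ => hs _ _
  have ez : ∀ a b, μ z (μ a b) = -μ (μ a b) z := fun _ _ => hs _ _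
  have et : ∀ a b, μ t (μ a b) = -μ (μ a b) t := fun _ _ => hs _ _
  have pairs : μ t z = -μ z t ∧ μ z y = -μ y z ∧ μ y w = -μ w y ∧ μ w x = -μ x w ∧ μ t y = -μ y t ∧
      μ t w = -μ w t ∧ μ t x = -μ x t ∧ μ z w = -μ w z ∧ μ z x = -μ x z ∧ μ y x = -μ x y :=
    ⟨hs _ _, hs _ _, hs _ _, hs _ _, hs _ _, hs _ _, hs _ _, hs _ _, hs _ _, hs _ _⟩
  obtain ⟨p1, p2, p3, p4, p5, p6, p7, p8, p9, p10⟩ := pairs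
  have qx : (∀ c, μ (μ w y) (μ x c) = -μ (μ x c) (μ w y)) ∧
      (∀ c, μ (μ w z) (μ x c) = -μ (μ x c) (μ w z)) ∧
      (∀ c, μ (μ w t) (μ x c) = -μ (μ x c) (μ w t)) ∧
      (∀ c, μ (μ y z) (μ x c) = -μ (μ x c) (μ y z)) ∧
      (∀ c, μ (μ y t) (μ x c) = -μ (μ x c) (μ y t)) ∧
      ∀ c, μ (μ z t) (μ x c) = -μ (μ x c) (μ z t) :=
    ⟨fun _ => hs _ _, fun _ => hs _ _, fun _ => hs _ _, fun _ => hs _ _, fun _ => hs _ _,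
      fun _ => hs _ _⟩
  have qw : (∀ c, μ (μ y z) (μ w c) = -μ (μ w c) (μ y z)) ∧
      (∀ c, μ (μ y t) (μ w c) = -μ (μ w c) (μ y t)) ∧
      ∀ c, μ (μ z t) (μ w c) = -μ (μ w c) (μ z t) :=
    ⟨fun _ => hs _ _, fun _ => hs _ _, fun _ => hs _ _⟩
  simp only [pfun, mh, mbr, map_add, map_sub, map_neg, map_smul, LinearMap.add_apply,
    LinearMap.sub_apply, LinearMap.neg_apply, LinearMap.smul_apply, e3, ex, ew, ey, ez, et,
    p1, p2, p3, p4, p5, p6, p7, p8, p9, p10, neg_neg, smul_neg, qx.2.1, qx.2.2.1,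
    qx.2.2.2.1, qx.2.2.2.2.1, qx.2.2.2.2.2, qw.1]
    at m1 m2 m3 m4 m5 m6 m7 m8 m9 m10 m11 m12 h1 h2 h3 ⊢
  linear_combination (norm := module) -m1 + m2 + m3 + m4 - m5 - m6 + m7 + m8 + m9 - m10 + m11 - m12 -
    h1 + h2 + h3

theorem NMset_eq_NMker (L : Submodule K M) : NMset μ L = NMker μ L := by
  ext m
  simp [NMset, NMker, jop, mjac]

theorem mjac_eq_zero_of_mem_span {E H F : M} (hs : ∀ x y, μ x y = -μ y x) (h0 : ∀ x, μ x x = 0)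
    (hEH : μ E H = E) (hFH : μ F H = -F) (hEF : μ E F = (2⁻¹ : K) • H) {a b c : M}
    (ha : a ∈ Submodule.span K {E, H, F}) (hb : b ∈ Submodule.span K {E, H, F})
    (hc : c ∈ Submodule.span K {E, H, F}) : mjac μ a b c = 0 := by
  rw [Submodule.mem_span_triple] at ha hb hc
  obtain ⟨a₁, a₂, a₃, rfl⟩ := ha
  obtain ⟨b₁, b₂, b₃, rfl⟩ := hb
  obtain ⟨c₁, c₂, c₃, rfl⟩ := hc
  simp only [mjac, map_add, map_neg, map_smul, LinearMap.add_apply, LinearMap.neg_apply,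
    LinearMap.smul_apply, hEH, hFH, hEF, hs H E, hs H F, hs F E, h0, neg_neg, smul_zero, add_zero,
    zero_add]
  module

theorem three_smul_eq_pfun (hM : IsMalcev μ) (hH : InVarietyH μ) (h2 : (2 : K) ≠ 0) {E H F : M}
    (hEH : μ E H = E) (hFH : μ F H = -F) (hEF : μ E F = (2⁻¹ : K) • H)
    (hfaith : ∀ m : M, μ m E = 0 → μ m H = 0 → μ m F = 0 → m = 0) {m : M}
    (jEH : mjac μ m E H = 0) (jEF : mjac μ m E F = 0) (jHF : mjac μ m H F = 0) :
    (3 : K) • m = pfun μ E m F H - pfun μ F m E H + pfun μ H m E F := by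
  have hs : ∀ a b, μ a b = -μ b a := hM.anticomm
  have h0 := hM.1
  have eE : ∀ a, μ E (μ m a) = -μ (μ m a) E := fun _ => hs _ _
  have eH : ∀ a, μ H (μ m a) = -μ (μ m a) H := fun _ => hs _ _
  have eF : ∀ a, μ F (μ m a) = -μ (μ m a) F := fun _ => hs _ _
  rw [← sub_eq_zero]
  have n1 := hM.2 E H m H
  have n2 := hM.2 H m F E
  have kE1 := hH H m E F E
  have kE2 := hH F E E H m
  have kH1 := hH F E H H m
  have kH2 := hH H F H E m
  have kF1 := hH m F H F E
  have kF2 := hH F H H H m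
  have kF3 := hH F m H E F
  have kF4 := hH H E F m F
  have kF5 := hH F m F E H
  have jEHH := congrArg (fun v => μ v H) jEH
  have jEFE := congrArg (fun v => μ v E) jEF
  have jEFH := congrArg (fun v => μ v H) jEF
  have jEFF := congrArg (fun v => μ v F) jEF
  have jHFE := congrArg (fun v => μ v E) jHF
  have jHFH := congrArg (fun v => μ v H) jHF
  simp only [mh, mbr, mjac, map_add, map_sub, map_neg, map_smul, map_zero,
    LinearMap.add_apply, LinearMap.sub_apply, LinearMap.neg_apply, LinearMap.smul_apply,
    LinearMap.zero_apply, eE, eH, eF, hEH, hFH, hEF, hs H E, hs H F, hs F E, h0,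
    hs E m, hs H m, hs F m, neg_neg, smul_neg]
    at n1 n2 kE1 kE2 kH1 kH2 kF1 kF2 kF3 kF4 kF5 jEH jEF jHF jEHH jEFE jEFH jEFF jHFE jHFH
  apply hfaith
  all_goals
    simp only [pfun, mbr, map_add, map_sub, map_neg, map_smul, map_zero,
      LinearMap.add_apply, LinearMap.sub_apply, LinearMap.neg_apply, LinearMap.smul_apply,
      LinearMap.zero_apply, eE, eH, eF, hEH, hFH, hEF, hs H F, hs F E, h0,
      hs E m, hs H m, hs F m, neg_neg, smul_neg]
  · linear_combination (norm := skip) (2 : K) • jEFE - jEHH - (3 / 2 : K) • jEH + (2 : K) • kE1 -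
      (3 / 2 : K) • (jEH - n1) - kE2
    match_scalars <;> field_simp <;> ring
  · linear_combination (norm := skip) -(2 : K) • jEFH - (6 : K) • (jHFE - n2) + (4 : K) • jHFE -
      kH1 - (2 : K) • kH2
    match_scalars <;> field_simp <;> ring
  · linear_combination (norm := skip) -(3 : K) • jHF + jHFH + kF1 + (1 / 2 : K) • kF2 +
      (2 : K) • kF3 + (2 : K) • kF4 - (2 : K) • jEFF + kF5
    match_scalars <;> field_simp <;> ring

theorem eq_zero_of_mem_centroid {L : Submodule K M} (hfaith : ∀ m : M, m ≠ 0 → ∃ a ∈ L, μ m a ≠ 0)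
    {α : Module.End K M} (hα : α ∈ centroid μ) (h : ∀ a ∈ L, α a = 0) : α = 0 := by
  ext m
  by_contra hm
  obtain ⟨a, ha, hne⟩ := hfaith _ hm
  rw [← (hα m a).2, (hα m a).1, h a ha, map_zero] at hne
  exact hne rfl

theorem eq_zero_of_apply_eq_zero {E H F : M} {L : Submodule K M} (h2 : (2 : K) ≠ 0)
    (hEH : μ E H = E) (hFH : μ F H = -F) (hEF : μ E F = (2⁻¹ : K) • H)
    (hL : L = Submodule.span K {E, H, F})
    (hfaith : ∀ m : M, m ≠ 0 → ∃ a ∈ L, μ m a ≠ 0)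
    {α : Module.End K M} (hα : α ∈ centroid μ) (h : α E = 0 ∨ α H = 0 ∨ α F = 0) : α = 0 := by
  have hH : α H = 0 := by
    have e : α H = (2 : K) • α (μ E F) := by rw [hEF, map_smul, smul_inv_smul₀ h2]
    rcases h with h | h | h
    · rw [e, (hα E F).2, h, map_zero, LinearMap.zero_apply, smul_zero]
    · exact h
    · rw [e, (hα E F).1, h, map_zero, smul_zero]
  have hE : α E = 0 := by rw [← hEH, (hα E H).1, hH, map_zero]
  have hF : α F = 0 := by rw [← neg_eq_zero, ← map_neg, ← hFH, (hα F H).1, hH, map_zero]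
  have hle : L ≤ LinearMap.ker α := by
    rw [hL, Submodule.span_le]
    rintro x (rfl | rfl | rfl) <;> assumption
  exact eq_zero_of_mem_centroid hfaith hα fun a ha => hle ha

end Identities

section Operators

variable (μ : M →ₗ[K] M →ₗ[K] M)

/-- the linear operator `x ↦ p(x,y,a,b)` -/
def pEnd (y a b : M) : Module.End K M where
  toFun x := pfun μ x y a b
  map_add' x x' := by
    simp only [pfun, mbr, map_add, LinearMap.add_apply]
    module
  map_smul' c x := by
    simp only [pfun, mbr, map_smul, LinearMap.smul_apply, RingHom.id_apply]
    module

variable {μ}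

theorem pEnd_mem_Uspan {L : Submodule K M} (y : M) {a b : M} (ha : a ∈ L) (hb : b ∈ L) :
    pEnd μ y a b ∈ Uspan μ L :=
  Submodule.subset_span ⟨y, a, ha, b, hb, fun _ => rfl⟩

variable (μ) in
/-- the centroid as a submodule of `Module.End K M` -/
def centroidSubmodule : Submodule K (Module.End K M) where
  carrier := centroid μ
  zero_mem' x y := by simp
  add_mem' {α β} hα hβ x y := by
    simp only [LinearMap.add_apply, map_add]
    exact ⟨by rw [(hα x y).1, (hβ x y).1], by rw [(hα x y).2, (hβ x y).2]⟩
  smul_mem' c α hα x y := by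
    simp only [LinearMap.smul_apply, map_smul]
    exact ⟨by rw [(hα x y).1], by rw [(hα x y).2]⟩

theorem Uspan_le_centroidSubmodule (hM : IsMalcev μ) (hH : InVarietyH μ) (L : Submodule K M) :
    Uspan μ L ≤ centroidSubmodule μ := by
  refine Submodule.span_le.2 ?_
  rintro φ ⟨y, a, -, b, -, hφ⟩ u v
  simp only [hφ]
  refine ⟨?_, pfun_mul_left hM hH u v y a b⟩
  have h : φ (μ u v) = -φ (μ v u) := by rw [hM.anticomm u v, map_neg]
  rw [← hφ, h, hφ, pfun_mul_left hM hH, ← hM.anticomm]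

theorem apply_pfun_of_mem_centroid {α : Module.End K M} (hα : α ∈ centroid μ) (x y a b : M) :
    α (pfun μ x y a b) = pfun μ x (α y) a b := by
  have h₁ : ∀ x y, μ x (α y) = α (μ x y) := fun x y => ((hα x y).1).symm
  have h₂ : ∀ x y, μ (α x) y = α (μ x y) := fun x y => ((hα x y).2).symm
  simp only [pfun, mbr, h₁, h₂, map_add, map_sub, map_neg, map_smul]

theorem mul_mem_Uspan {L : Submodule K M} {α β : Module.End K M} (hα : α ∈ centroid μ)
    (hβ : β ∈ Uspan μ L) : α * β ∈ Uspan μ L := by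
  induction hβ using Submodule.span_induction with
  | mem φ h =>
    obtain ⟨y, a, ha, b, hb, hφ⟩ := h
    exact Submodule.subset_span ⟨α y, a, ha, b, hb, fun x => by
      rw [Module.End.mul_apply, hφ, apply_pfun_of_mem_centroid hα]⟩
  | zero => simp
  | add φ ψ _ _ hφ hψ => rw [mul_add]; exact add_mem hφ hψ
  | smul c φ _ hφ => rw [mul_smul_comm]; exact Submodule.smul_mem _ c hφ

theorem mul_comm_of_mem_centroid {L : Submodule K M}
    (hfaith : ∀ m : M, m ≠ 0 → ∃ a ∈ L, μ m a ≠ 0) {α β : Module.End K M}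
    (hα : α ∈ centroid μ) (hβ : β ∈ centroid μ) : α * β = β * α := by
  rw [← sub_eq_zero]
  ext m
  by_contra hm
  obtain ⟨a, -, hne⟩ := hfaith _ hm
  apply hne
  simp only [LinearMap.sub_apply, Module.End.mul_apply, map_sub]
  rw [← (hα (β m) a).2, ← (hβ m a).2, ← (hβ (α m) a).2, (hβ m a).1, (hα m _).2, (hβ (α m) a).1,
    sub_self]

end Operators

/-- Coordinatization of `N_M`: `U ⊆ Γ(M)` is a commutative
associative algebra, `N_M = L·U`, and `N_M ≅ sl₂(F) ⊗ U` as algebras. -/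
theorem stmt1
    (h2 : (2 : K) ≠ 0) (h3 : (3 : K) ≠ 0)
    (μ : M →ₗ[K] M →ₗ[K] M) (hMal : IsMalcev μ) (hVarH : InVarietyH μ)
    (E H F : M) (hind : LinearIndependent K ![E, H, F])
    (hEH : μ E H = E) (hFH : μ F H = -F) (hEF : μ E F = (2⁻¹ : K) • H)
    (L : Submodule K M) (hL : L = Submodule.span K {E, H, F})
    (hfaith : ∀ m : M, m ≠ 0 → ∃ a ∈ L, μ m a ≠ 0) :
    ((Uspan μ L : Set (Module.End K M)) ⊆ centroid μ) ∧
    (∀ α ∈ Uspan μ L, ∀ β ∈ Uspan μ L, α * β ∈ Uspan μ L) ∧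
    (∀ α ∈ Uspan μ L, ∀ β ∈ Uspan μ L, α * β = β * α) ∧
    (NMset μ L = (Submodule.span K {m : M | ∃ a ∈ L, ∃ φ ∈ Uspan μ L, m = φ a} : Submodule K M)) ∧
    (∃ e : (↥L ⊗[K] ↥(Uspan μ L)) ≃ₗ[K] ↥(NMker μ L),
      (∀ (a : ↥L) (α : ↥(Uspan μ L)),
        ((e (a ⊗ₜ[K] α) : ↥(NMker μ L)) : M) = (α : Module.End K M) (a : M)) ∧
      (∀ (a b : ↥L) (α β : ↥(Uspan μ L)) (c : ↥L) (γ : ↥(Uspan μ L)),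
        (c : M) = μ (a : M) (b : M) →
        (γ : Module.End K M) = (α : Module.End K M) * (β : Module.End K M) →
        μ ((e (a ⊗ₜ[K] α) : ↥(NMker μ L)) : M) ((e (b ⊗ₜ[K] β) : ↥(NMker μ L)) : M) =
          ((e (c ⊗ₜ[K] γ) : ↥(NMker μ L)) : M))) := by
  have hs : ∀ a b, μ a b = -μ b a := hMal.anticomm
  have hE : E ∈ L := hL ▸ Submodule.subset_span (by simp)
  have hH : H ∈ L := hL ▸ Submodule.subset_span (by simp)
  have hF : F ∈ L := hL ▸ Submodule.subset_span (by simp)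
  have hU : ∀ α ∈ Uspan μ L, α ∈ centroid μ := fun α hα =>
    Uspan_le_centroidSubmodule hMal hVarH L hα
  have hzero : ∀ α ∈ Uspan μ L, α E = 0 ∨ α H = 0 ∨ α F = 0 → α = 0 := fun α hα =>
    eq_zero_of_apply_eq_zero h2 hEH hFH hEF hL hfaith (hU α hα)
  have hmem : ∀ a ∈ L, ∀ α ∈ Uspan μ L, α a ∈ NMset μ L := by
    intro a ha α hα b hb c hc
    have hc' := hU α hα
    have : mjac μ (α a) b c = α (mjac μ a b c) := by
      simp only [mjac, map_add]
      rw [(hc' (μ a b) c).2, (hc' a b).2, (hc' (μ b c) a).1, (hc' (μ c a) b).2, (hc' c a).1]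
    rw [this, mjac_eq_zero_of_mem_span hs hMal.1 hEH hFH hEF (hL ▸ ha) (hL ▸ hb) (hL ▸ hc),
      map_zero]
  have hfaith' : ∀ m : M, μ m E = 0 → μ m H = 0 → μ m F = 0 → m = 0 := by
    intro m h₁ h₂ h₃
    by_contra hm
    obtain ⟨a, ha, hne⟩ := hfaith m hm
    have hle : L ≤ LinearMap.ker (μ m) := by
      rw [hL, Submodule.span_le]
      rintro x (rfl | rfl | rfl) <;> assumption
    exact hne (hle ha)
  have hrep : ∀ m ∈ NMset μ L, m = pEnd μ ((3⁻¹ : K) • m) F H E +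
      (-pEnd μ ((3⁻¹ : K) • m) E H) F + pEnd μ ((3⁻¹ : K) • m) E F H := by
    intro m hm
    have hm' : (3⁻¹ : K) • m ∈ NMker μ L :=
      Submodule.smul_mem _ _ ((NMset_eq_NMker (μ := μ) L).subset hm)
    have hm'' := (NMset_eq_NMker (μ := μ) L).superset hm'
    have := three_smul_eq_pfun hMal hVarH h2 hEH hFH hEF hfaith' (hm'' E hE H hH) (hm'' E hE F hF)
      (hm'' H hH F hF)
    rw [smul_inv_smul₀ h3] at this
    rw [LinearMap.neg_apply, ← sub_eq_add_neg]
    exact this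
  refine ⟨hU, fun α hα β hβ => mul_mem_Uspan (hU α hα) hβ,
    fun α hα β hβ => mul_comm_of_mem_centroid hfaith (hU α hα) (hU β hβ), ?_, ?_⟩
  · apply Set.Subset.antisymm
    · intro m hm
      rw [hrep m hm]
      refine add_mem (add_mem ?_ ?_) ?_
      · exact Submodule.subset_span ⟨E, hE, _, pEnd_mem_Uspan _ hF hH, rfl⟩
      · exact Submodule.subset_span ⟨F, hF, _, neg_mem (pEnd_mem_Uspan _ hE hH), rfl⟩
      · exact Submodule.subset_span ⟨H, hH, _, pEnd_mem_Uspan _ hE hF, rfl⟩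
    · rw [NMset_eq_NMker, SetLike.coe_subset_coe, Submodule.span_le, ← NMset_eq_NMker]
      rintro _ ⟨a, ha, φ, hφ, rfl⟩
      exact hmem a ha φ hφ
  · let g : ↥L →ₗ[K] ↥(Uspan μ L) →ₗ[K] M :=
      ((LinearMap.id (R := K) (M := Module.End K M)).domRestrict (Uspan μ L)).flip.domRestrict L
    have hg : ∀ a α, TensorProduct.lift g (a ⊗ₜ[K] α) = (α : Module.End K M) (a : M) :=
      fun _ _ => rfl
    have hgN : ∀ t, TensorProduct.lift g t ∈ NMker μ L := by
      intro t
      induction t with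
      | zero => simp
      | tmul a α =>
        rw [hg]
        exact (NMset_eq_NMker (μ := μ) L).subset (hmem a a.2 α α.2)
      | add s t hs ht => rw [map_add]; exact add_mem hs ht
    have hnorm : ∀ t : ↥L ⊗[K] ↥(Uspan μ L), ∃ α β γ : ↥(Uspan μ L),
        t = (⟨E, hE⟩ : L) ⊗ₜ[K] α + (⟨H, hH⟩ : L) ⊗ₜ[K] β + (⟨F, hF⟩ : L) ⊗ₜ[K] γ := by
      intro t
      induction t with
      | zero => exact ⟨0, 0, 0, by simp⟩
      | tmul a α =>
        obtain ⟨x, y, z, h⟩ := Submodule.mem_span_triple.1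
          (hL ▸ a.2 : (a : M) ∈ Submodule.span K {E, H, F})
        refine ⟨x • α, y • α, z • α, ?_⟩
        have ha : a = x • (⟨E, hE⟩ : L) + y • (⟨H, hH⟩ : L) + z • (⟨F, hF⟩ : L) :=
          Subtype.ext h.symm
        simp only [← TensorProduct.smul_tmul, ← TensorProduct.add_tmul, ← ha]
      | add s t hs ht =>
        obtain ⟨α, β, γ, rfl⟩ := hs
        obtain ⟨α', β', γ', rfl⟩ := ht
        refine ⟨α + α', β + β', γ + γ', ?_⟩
        simp only [TensorProduct.tmul_add]
        abel
    have hinj : Function.Injective ((TensorProduct.lift g).codRestrict (NMker μ L) hgN) := by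
      rw [injective_iff_map_eq_zero]
      intro t ht
      obtain ⟨⟨α, hα⟩, ⟨β, hβ⟩, ⟨γ, hγ⟩, rfl⟩ := hnorm t
      have h : α E + β H + γ F = 0 := congrArg Subtype.val ht
      have cα := hU α hα
      have cβ := hU β hβ
      have cγ := hU γ hγ
      have key : ∀ x y, α (μ (μ E x) y) + β (μ (μ H x) y) + γ (μ (μ F x) y) = 0 := by
        intro x y
        rw [(cα (μ E x) y).2, (cα E x).2, (cβ (μ H x) y).2, (cβ H x).2, (cγ (μ F x) y).2,
          (cγ F x).2, ← LinearMap.add_apply, ← LinearMap.add_apply, ← map_add, ← map_add,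
          ← LinearMap.add_apply, ← LinearMap.add_apply, ← map_add, ← map_add, h]
        simp
      have hγ0 : γ = 0 := by
        refine hzero γ hγ (Or.inl ?_)
        simpa [hs H E, hs F E, hEH, hEF, hMal.1, h2] using key E E
      have hα0 : α = 0 := by
        refine hzero α hα (Or.inr (Or.inr ?_))
        simpa [hs H F, hFH, hEF, hMal.1, h2] using key F F
      subst hγ0 hα0
      have hβ0 : β = 0 := hzero β hβ (Or.inr (Or.inl (by simpa using h)))
      subst hβ0
      have z : ∀ h, (⟨0, h⟩ : ↥(Uspan μ L)) = 0 := fun _ => rfl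
      simp only [z, TensorProduct.tmul_zero, add_zero]
    have hsurj : Function.Surjective ((TensorProduct.lift g).codRestrict (NMker μ L) hgN) := by
      rintro ⟨m, hm⟩
      refine ⟨(⟨E, hE⟩ : L) ⊗ₜ[K] ⟨_, pEnd_mem_Uspan ((3⁻¹ : K) • m) hF hH⟩ +
        (⟨F, hF⟩ : L) ⊗ₜ[K] ⟨_, neg_mem (pEnd_mem_Uspan ((3⁻¹ : K) • m) hE hH)⟩ +
        (⟨H, hH⟩ : L) ⊗ₜ[K] ⟨_, pEnd_mem_Uspan ((3⁻¹ : K) • m) hE hF⟩, Subtype.ext ?_⟩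
      exact (hrep m ((NMset_eq_NMker (μ := μ) L).superset hm)).symm
    refine ⟨LinearEquiv.ofBijective _ ⟨hinj, hsurj⟩, fun a α => hg a α, ?_⟩
    intro a b α β c γ hc hγ
    change μ ((α : Module.End K M) a) ((β : Module.End K M) b) = (γ : Module.End K M) c
    rw [hγ, hc, Module.End.mul_apply, (hU β β.2 a b).1, (hU α α.2 a _).2]

end
end

section
/- Let M be a Malcev algebra over F lying in the variety H, containing L = sl2(F), and such that mL ≠ 0 for every nonzero m ∈ M, and let ⟨·,·⟩ : V × V → U be the skew-symmetric bilinear map determined by u(1)v(1) = F⟨u,v⟩, u(1)v(2) = u(2)v(1) = (1/2)H⟨u,v⟩, u(2)v(2) = E⟨u,v⟩. Then for all u, v, w, t ∈ V: (i) w⟨u,v⟩ + u⟨v,w⟩ + v⟨w,u⟩ = 0 (where x α denotes the action of the centroid element α on x ∈ M), and (ii) ⟨w,t⟩⟨u,v⟩ + ⟨u,t⟩⟨v,w⟩ + ⟨v,t⟩⟨w,u⟩ = 0 in U. -/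
section
variable {K : Type*} [Field K] {M : Type*} [AddCommGroup M] [Module K M]

/-- `N_M = L·U`: the span of the elements `aα`, `a ∈ L`, `α ∈ U` -/
def NMspan (μ : M →ₗ[K] M →ₗ[K] M) (L : Submodule K M) : Submodule K M :=
  Submodule.span K {m : M | ∃ a ∈ L, ∃ φ ∈ Uspan μ L, m = φ a}

/-- the linear operator `m ↦ {m,a,b}` -/
def bop (μ : M →ₗ[K] M →ₗ[K] M) (a b : M) : M →ₗ[K] M :=
  μ.flip b ∘ₗ μ.flip a - μ.flip a ∘ₗ μ.flip b + (2 : K) • μ.flip (μ a b)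

/-- `J_M` as a submodule (intersection of the kernels of `m ↦ {m,a,b}`, `a,b ∈ L`) -/
def JMker (μ : M →ₗ[K] M →ₗ[K] M) (L : Submodule K M) : Submodule K M :=
  ⨅ (a : M) (_ : a ∈ L) (b : M) (_ : b ∈ L), LinearMap.ker (bop μ a b)

/-- `Ann_M L` as a set -/
def AnnSet (μ : M →ₗ[K] M →ₗ[K] M) (L : Submodule K M) : Set M :=
  {m : M | ∀ a ∈ L, μ m a = 0}

/-- `Ann_M L` as a submodule -/
def Annker (μ : M →ₗ[K] M →ₗ[K] M) (L : Submodule K M) : Submodule K M :=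
  ⨅ (a : M) (_ : a ∈ L), LinearMap.ker (μ.flip a)

/-- `V = {w ∈ J_M : wH = w, wF = 0}` as a set -/
def Vset (μ : M →ₗ[K] M →ₗ[K] M) (L : Submodule K M) (Hm Fm : M) : Set M :=
  {w : M | w ∈ JMset μ L ∧ μ w Hm = w ∧ μ w Fm = 0}

/-- `V = {w ∈ J_M : wH = w, wF = 0}` as a submodule -/
def Vsub (μ : M →ₗ[K] M →ₗ[K] M) (L : Submodule K M) (Hm Fm : M) : Submodule K M :=
  JMker μ L ⊓ LinearMap.ker (μ.flip Hm - LinearMap.id) ⊓ LinearMap.ker (μ.flip Fm)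

lemma IsMalcev.skew {μ : M →ₗ[K] M →ₗ[K] M} (hMal : IsMalcev μ) (s t : M) :
    μ s t = -μ t s := by
  have h := hMal.1 (s + t)
  simp only [map_add, LinearMap.add_apply, hMal.1, zero_add, add_zero] at h
  exact eq_neg_of_add_eq_zero_right h

/-- In the variety `𝓗` the operators `x ↦ p(x,y,z,b)` commute with right multiplications. -/
lemma pfun_mul_left_s8 (μ : M →ₗ[K] M →ₗ[K] M) (hMal : IsMalcev μ) (hVarH : InVarietyH μ)
    (a b x y z : M) : pfun μ (μ x a) y z b = μ (pfun μ x y z b) a := by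
  have hs : ∀ s t, μ s t = -μ t s := IsMalcev.skew hMal
  have hm := hMal.2
  have m₁ := hm a y (μ z b) x
  have m₂ := hm a (μ z b) x y
  have m₃ := hm b (μ x a) z y
  have m₄ := hm b z (μ x a) y
  have m₅ := hm x z (μ b a) y
  have m₆ := hm b z y (μ x a)
  have m₇ := hm a b x (μ z y)
  have m₈ := hm x (μ b a) y z
  have m₉ := hm a x b (μ z y)
  have m₁₀ := hm a (μ y x) b z
  have m₁₁ := hm a z (μ y x) b
  have h₁ := hVarH x b z a y
  have h₂ := hVarH b a y x z
  have h₃ := hVarH y z a b x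
  simp only [pfun, mh, mbr, map_add, map_sub, map_neg, map_smul, LinearMap.add_apply,
    LinearMap.sub_apply, LinearMap.neg_apply, LinearMap.smul_apply,
    hs b a, hs x a, hs y a, hs z a, hs x b, hs y b, hs z b, hs y x, hs z x, hs z y,
    fun s t => hs a (μ s t), fun s t => hs b (μ s t), fun s t => hs x (μ s t),
    fun s t => hs y (μ s t), fun s t => hs z (μ s t),
    fun p q r s t => hs (μ p q) (μ (μ r s) t),
    hs (μ x y) (μ a b), hs (μ x z) (μ a b), hs (μ y z) (μ a b), hs (μ b y) (μ a x),
    hs (μ b z) (μ a x), hs (μ y z) (μ a x), hs (μ b x) (μ a z), hs (μ x y) (μ b z)]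
    at m₁ m₂ m₃ m₄ m₅ m₆ m₇ m₈ m₉ m₁₀ m₁₁ h₁ h₂ h₃ ⊢
  linear_combination (norm := module) -m₁ - m₂ + m₃ + m₄ - m₅ + (2 : K) • m₆ - m₇ - m₈ - m₉ - m₁₀ - m₁₁
    + h₁ - h₂ + h₃

/-- In the variety `𝓗` the space `U` is contained in the centroid. -/
lemma Uspan_subset_centroid {μ : M →ₗ[K] M →ₗ[K] M} (hMal : IsMalcev μ) (hVarH : InVarietyH μ)
    (L : Submodule K M) {α : Module.End K M} (hα : α ∈ Uspan μ L) : α ∈ centroid μ := by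
  have key : ∀ x y, α (μ x y) = μ (α x) y := by
    induction hα using Submodule.span_induction with
    | mem φ hφ =>
      obtain ⟨y, a, -, b, -, h⟩ := hφ
      intro x c
      rw [h, h, pfun_mul_left_s8 μ hMal hVarH]
    | zero => simp
    | add φ ψ _ _ hφ hψ => intro x y; simp [hφ x y, hψ x y]
    | smul c φ _ hφ => intro x y; simp [hφ x y]
  exact fun x y => ⟨by rw [hMal.skew x y, map_neg, key, ← hMal.skew], key x y⟩

/-- For the skew-symmetric bilinear map `⟨·,·⟩ : V × V → U`
determined by `u(1)v(1) = F⟨u,v⟩`, `u(1)v(2) = u(2)v(1) = ½H⟨u,v⟩`,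
`u(2)v(2) = E⟨u,v⟩`, one has
(i) `w⟨u,v⟩ + u⟨v,w⟩ + v⟨w,u⟩ = 0` and
(ii) `⟨w,t⟩⟨u,v⟩ + ⟨u,t⟩⟨v,w⟩ + ⟨v,t⟩⟨w,u⟩ = 0`. -/
theorem stmt8
    (h2 : (2 : K) ≠ 0) (h3 : (3 : K) ≠ 0)
    (μ : M →ₗ[K] M →ₗ[K] M) (hMal : IsMalcev μ) (hVarH : InVarietyH μ)
    (E H F : M) (hind : LinearIndependent K ![E, H, F])
    (hEH : μ E H = E) (hFH : μ F H = -F) (hEF : μ E F = (2⁻¹ : K) • H)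
    (L : Submodule K M) (hL : L = Submodule.span K {E, H, F})
    (hfaith : ∀ m : M, m ≠ 0 → ∃ a ∈ L, μ m a ≠ 0)
    (bk : M → M → Module.End K M)
    (hbk : ∀ u ∈ Vset μ L H F, ∀ v ∈ Vset μ L H F,
      bk u v ∈ Uspan μ L ∧
      μ u v = bk u v F ∧
      μ u (μ v E) = (2⁻¹ : K) • (bk u v H) ∧
      μ (μ u E) v = (2⁻¹ : K) • (bk u v H) ∧
      μ (μ u E) (μ v E) = bk u v E)
    (hskew : ∀ u ∈ Vset μ L H F, ∀ v ∈ Vset μ L H F, bk u v = -(bk v u))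
    (hadd : ∀ u ∈ Vset μ L H F, ∀ u' ∈ Vset μ L H F, ∀ v ∈ Vset μ L H F,
      bk (u + u') v = bk u v + bk u' v)
    (hsmul : ∀ (c : K), ∀ u ∈ Vset μ L H F, ∀ v ∈ Vset μ L H F, bk (c • u) v = c • bk u v) :
    (∀ u ∈ Vset μ L H F, ∀ v ∈ Vset μ L H F, ∀ w ∈ Vset μ L H F,
      bk u v w + bk v w u + bk w u v = 0) ∧
    (∀ u ∈ Vset μ L H F, ∀ v ∈ Vset μ L H F, ∀ w ∈ Vset μ L H F, ∀ t ∈ Vset μ L H F,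
      bk w t * bk u v + bk u t * bk v w + bk v t * bk w u = 0) := by
  have hs := hMal.skew
  have hEL : E ∈ L := hL ▸ Submodule.subset_span (by simp)
  have hcent : ∀ u ∈ Vset μ L H F, ∀ v ∈ Vset μ L H F, bk u v ∈ centroid μ := fun u hu v hv =>
    Uspan_subset_centroid hMal hVarH L (hbk u hu v hv).1
  have jacobi : ∀ u ∈ Vset μ L H F, ∀ v ∈ Vset μ L H F, ∀ w ∈ Vset μ L H F,
      bk u v w + bk v w u + bk w u v = 0 := by
    intro u hu v hv w hw
    -- the Malcev identity for `u, v, w, E`, each term rewritten through the centroid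
    have m := hMal.2 u v w E
    have actH : ∀ x ∈ Vset μ L H F, ∀ α ∈ centroid μ, μ (α H) x = -α x := fun x hx α hα => by
      rw [← (hα H x).2, hs H x, hx.2.1, map_neg]
    have h₁ : μ (μ u w) (μ v E) = bk u w v := by
      have hF : μ F (μ v E) = v := by
        have hJ := hv.1 E hEL F (hL ▸ Submodule.subset_span (by simp))
        simp only [mbr, hEF, hv.2.2, map_smul, hv.2.1, map_zero, LinearMap.zero_apply, sub_zero,
          smul_smul, mul_inv_cancel₀ h2, one_smul] at hJ
        rw [hs, eq_neg_of_add_eq_zero_left hJ, neg_neg]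
      rw [(hbk u hu w hw).2.1, ← (hcent u hu w hw F _).2, hF]
    have h₂ : μ (μ u v) w = 0 := by
      rw [(hbk u hu v hv).2.1, ← (hcent u hu v hv F _).2, hs F w, hw.2.2, neg_zero, map_zero]
    have h₃ : μ (μ (μ v w) E) u = (2⁻¹ : K) • bk v w u := by
      rw [(hbk v hv w hw).2.1, ← (hcent v hv w hw F _).2, hs F E, hEF, map_neg, map_smul,
        map_neg, map_smul, LinearMap.neg_apply, LinearMap.smul_apply,
        actH u hu _ (hcent v hv w hw), smul_neg, neg_neg]
    have h₄ : μ (μ (μ w E) u) v = -((2⁻¹ : K) • bk w u v) := by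
      rw [(hbk w hw u hu).2.2.2.1, map_smul, LinearMap.smul_apply,
        actH v hv _ (hcent w hw u hu), smul_neg]
    have h₅ : μ (μ (μ E u) v) w = (2⁻¹ : K) • bk u v w := by
      rw [hs E u, map_neg, LinearMap.neg_apply, (hbk u hu v hv).2.2.2.1, map_neg,
        LinearMap.neg_apply, map_smul, LinearMap.smul_apply,
        actH w hw _ (hcent u hu v hv), smul_neg, neg_neg]
    rw [h₁, h₂, h₃, h₄, h₅, hskew u hu w hw, LinearMap.neg_apply, map_zero,
      LinearMap.zero_apply, zero_add] at m
    have m' := congrArg ((2 : K) • ·) m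
    simp only [smul_add, smul_neg, smul_smul, mul_inv_cancel₀ h2, one_smul] at m'
    linear_combination (norm := module) -m'
  refine ⟨jacobi, fun u hu v hv w hw t ht => ?_⟩
  set β := bk w t * bk u v + bk u t * bk v w + bk v t * bk w u with hβ
  have hprod : ∀ α ∈ centroid μ, ∀ γ ∈ centroid μ, ∀ x y,
      (α * γ) (μ x y) = μ ((α * γ) x) y ∧ (α * γ) (μ x y) = μ x ((α * γ) y) :=
    fun α hα γ hγ x y => by
      simp [(hγ x y).2, (hα _ y).2, ← (hγ x y).1, ← (hα x _).1]
  have hβr : ∀ x y, β (μ x y) = μ (β x) y := fun x y => by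
    simp only [hβ, LinearMap.add_apply, map_add,
      (hprod _ (hcent w hw t ht) _ (hcent u hu v hv) x y).1,
      (hprod _ (hcent u hu t ht) _ (hcent v hv w hw) x y).1,
      (hprod _ (hcent v hv t ht) _ (hcent w hw u hu) x y).1]
  have hβl : ∀ x y, β (μ x y) = μ x (β y) := fun x y => by
    rw [hs x y, map_neg, hβr, ← hs]
  -- centroid elements commute on products, here on `F = -FH`
  have comm : ∀ α ∈ centroid μ, ∀ γ ∈ centroid μ, α (γ F) = γ (α F) := fun α hα γ hγ => by
    have hF : F = -μ F H := by rw [hFH, neg_neg]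
    rw [hF, map_neg, map_neg, map_neg, map_neg, (hγ F H).1, (hα F _).2, (hα F H).2, (hγ _ H).1]
  have hβF : β F = 0 := by
    have j := congrArg (fun x => μ x t) (jacobi u hu v hv w hw)
    simp only [map_add, LinearMap.add_apply, map_zero, LinearMap.zero_apply] at j
    rw [← (hcent u hu v hv w t).2, ← (hcent v hv w hw u t).2, ← (hcent w hw u hu v t).2,
      (hbk w hw t ht).2.1, (hbk u hu t ht).2.1, (hbk v hv t ht).2.1,
      ← comm _ (hcent w hw t ht) _ (hcent u hu v hv),
      ← comm _ (hcent u hu t ht) _ (hcent v hv w hw),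
      ← comm _ (hcent v hv t ht) _ (hcent w hw u hu)] at j
    exact j
  have hβH : β H = 0 := by
    have h := hβl E F
    rw [hβF, map_zero, hEF, map_smul] at h
    exact (smul_eq_zero.1 h).resolve_left (inv_ne_zero h2)
  have hβE : β E = 0 := by
    have h := hβl E H
    rwa [hβH, map_zero, hEH] at h
  have hβL : L ≤ LinearMap.ker β := by
    rw [hL, Submodule.span_le]
    rintro x (rfl | rfl | rfl) <;> simpa
  ext x
  by_contra hx
  obtain ⟨a, ha, hxa⟩ := hfaith (β x) hx
  exact hxa (by rw [← hβr, hβl, LinearMap.mem_ker.1 (hβL ha), map_zero])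

end
end
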